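/- Let Γ be a finitely presented LERF group and ρ : Γ → ℤ a surjective homomorphism whose kernel is not finitely generated. Then rg(Γ,ρ) > 0. -/

import Mathlib

/-!
Fix `τ` with `ρ τ = 1`. A finite presentation of `Γ` yields elements `x₁, …, xₙ` of `ker ρ`
which together with `τ` generate `Γ`, and a bound `N` such that, up to conjugation by powers of `τ`,
every relator is a word in the elements `x_{k,j} = τ ^ j x_k τ ^ (-j)` with `0 ≤ j ≤ N`.
Consequently (`exists_twistable`) a homomorphism `β : Γ → E` may be twisted, to one sending `τ` to
`β τ * z` and agreeing with `β` on each `x_k`, by any `z` that commutes with the image of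
`A = ⟨x_{k,j} : j < N⟩`. This plays the role of the decomposition of `Γ` as an HNN extension with
finitely generated base `⟨x_{k,j} : j ≤ N⟩`.

If `A` contained every `x_{k,N}`, then `τ A τ⁻¹ ≤ A`. In a LERF group a finitely generated subgroup
is not conjugate to a proper subgroup of itself (`IsLERF.conj_inv_mem`), so `τ` would normalise `A`,
and `A` would be all of `ker ρ`. Since `ker ρ` is not finitely generated, some `a = x_{k,N}` is not
in `A`, and LERF gives `α : Γ → Q` with `Q` finite and `α a ∉ α(A)`.

Let `Γ` act on `ℤ/i × Q × ℤ/2` by `ρ` mod `i` on the first factor and by `α` on the second. For each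
`c : ℤ/i → ℤ/2`, the permutation `(s, q, e) ↦ (s, q, e + c s * 1_{α(A)}(q))` commutes with `A`, so it
twists this action. Restricted to `G_i` and to the fibre over `0`, the twisted actions are actions on
the fixed finite set `Q × ℤ/2`, hence there are at most `C ^ rk(G_i)` of them with `C` independent of
`i`. With `m` the order of `α τ`, the action of `τ ^ (-mk) a τ ^ (mk)` detects
`c 0 + c m + ⋯ + c (m (k - 1))` when `c` is supported on multiples of `m`, so at least
`2 ^ ⌊i / m⌋` of the restricted actions are distinct (`two_pow_le`). Comparing the two counts shows
that `rk(G_i)` grows at least linearly in `i`.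
-/

/-- The rank of a group: the minimal number of generators. -/
noncomputable def grank (G : Type*) [Group G] : ℕ :=
  sInf {n : ℕ | ∃ S : Finset G, S.card = n ∧ Subgroup.closure (S : Set G) = ⊤}

/-- `modKer φ i` is the subgroup `G_i = Ker(G → ℤ → ℤ/iℤ)`. -/
def modKer {G : Type*} [Group G] (φ : G →* Multiplicative ℤ) (i : ℕ) : Subgroup G :=
  ((AddMonoidHom.toMultiplicative (Int.castAddHom (ZMod i))).comp φ).ker

/-- The rank gradient of `(G, φ)`:
`liminf_{i → ∞} rk(G_i) / [G : G_i]`. -/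
noncomputable def rg {G : Type*} [Group G] (φ : G →* Multiplicative ℤ) : ℝ :=
  Filter.liminf
    (fun i : ℕ => (grank (modKer φ i) : ℝ) / ((modKer φ i).index : ℝ)) Filter.atTop

/-- A group `Γ` is LERF if for every finitely generated subgroup `A ≤ Γ` and every
`γ ∈ Γ \ A` there is a homomorphism `α` from `Γ` onto a finite group with `α γ ∉ α(A)`. -/
def IsLERF (Γ : Type*) [Group Γ] : Prop :=
  ∀ A : Subgroup Γ, A.FG → ∀ γ : Γ, γ ∉ A →
    ∃ (Q : Type) (_ : Group Q) (_ : Finite Q) (α : Γ →* Q),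
      Function.Surjective α ∧ α γ ∉ α '' (A : Set Γ)

/-- A group is finitely presented if it is isomorphic to the quotient of a finitely
generated free group by finitely many relations. -/
def IsFinitelyPresented (Γ : Type*) [Group Γ] : Prop :=
  ∃ (n : ℕ) (rels : Set (FreeGroup (Fin n))),
    rels.Finite ∧ Nonempty (PresentedGroup rels ≃* Γ)

/-! ### Generators of the kernel and a twisting construction -/

/-- If `G` is generated by `t` and elements `x k` of `ker ρ`, and `ρ t` generates `ℤ`, then
`ker ρ` is generated by the conjugates of the `x k` by powers of `t`. -/
theorem ker_le_closure_conj {G ι : Type*} [Group G] (ρ : G →* Multiplicative ℤ) (t : G)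
    (x : ι → G) (ht : ρ t = Multiplicative.ofAdd 1) (hx : ∀ k, ρ (x k) = 1)
    (hgen : Subgroup.closure (Set.range x ∪ {t}) = ⊤) :
    ρ.ker ≤ Subgroup.closure {g | ∃ (k : ι) (j : ℤ), g = t ^ j * x k * (t ^ j)⁻¹} := by
  set D := Subgroup.closure {g | ∃ (k : ι) (j : ℤ), g = t ^ j * x k * (t ^ j)⁻¹} with hD
  have hconj : ∀ (s : ℤ), ∀ d ∈ D, t ^ s * d * (t ^ s)⁻¹ ∈ D := by
    intro s d hd
    induction hd using Subgroup.closure_induction with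
    | mem g hg =>
      obtain ⟨k, j, rfl⟩ := hg
      exact Subgroup.subset_closure ⟨k, s + j, by group⟩
    | one => simp
    | mul a b _ _ ha hb =>
      have := D.mul_mem ha hb
      simpa [mul_assoc] using this
    | inv a _ ha =>
      have := D.inv_mem ha
      simpa [mul_assoc] using this
  have hρD : ∀ d ∈ D, ρ d = 1 := by
    intro d hd
    have : D ≤ ρ.ker := by
      rw [hD, Subgroup.closure_le]
      rintro _ ⟨k, j, rfl⟩
      simp [MonoidHom.mem_ker, hx]
    exact this hd
  have key : ∀ g : G, ∃ d ∈ D, ∃ s : ℤ, g = d * t ^ s := by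
    intro g
    have hg : g ∈ Subgroup.closure (Set.range x ∪ {t}) := by rw [hgen]; trivial
    induction hg using Subgroup.closure_induction with
    | mem g hg =>
      rcases hg with ⟨k, rfl⟩ | hg
      · exact ⟨x k, Subgroup.subset_closure ⟨k, 0, by simp⟩, 0, by simp⟩
      · exact ⟨1, D.one_mem, 1, by simpa using hg⟩
    | one => exact ⟨1, D.one_mem, 0, by simp⟩
    | mul a b _ _ ha hb =>
      obtain ⟨d, hd, s, rfl⟩ := ha
      obtain ⟨d', hd', s', rfl⟩ := hb
      exact ⟨_, D.mul_mem hd (hconj s d' hd'), s + s', by group⟩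
    | inv a _ ha =>
      obtain ⟨d, hd, s, rfl⟩ := ha
      exact ⟨_, hconj (-s) _ (D.inv_mem hd), -s, by group⟩
  intro g hg
  obtain ⟨d, hd, s, rfl⟩ := key g
  rw [MonoidHom.mem_ker, map_mul, hρD d hd, one_mul, map_zpow, ht, ← ofAdd_zsmul] at hg
  have hs : s = 0 := by simpa using hg
  simpa [hs] using hd

/-- Conjugates of `x` by small powers of `b` and of `b * z` agree when `z` commutes with the
earlier conjugates. -/
theorem twist_conj_pow {E : Type*} [Group E] (b z x : E) (N : ℕ)
    (h : ∀ j < N, Commute z (b ^ j * x * (b ^ j)⁻¹)) :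
    ∀ j ≤ N, (b * z) ^ j * x * ((b * z) ^ j)⁻¹ = b ^ j * x * (b ^ j)⁻¹ := by
  intro j
  induction j with
  | zero => simp
  | succ j ih =>
    intro hj
    have h1 := ih (by omega)
    have h2 : z * (b ^ j * x * (b ^ j)⁻¹) * z⁻¹ = b ^ j * x * (b ^ j)⁻¹ := by
      rw [(h j (by omega)).eq, mul_inv_cancel_right]
    calc (b * z) ^ (j + 1) * x * ((b * z) ^ (j + 1))⁻¹
        = b * (z * ((b * z) ^ j * x * ((b * z) ^ j)⁻¹) * z⁻¹) * b⁻¹ := by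
          rw [pow_succ']; simp only [mul_inv_rev, mul_assoc]
      _ = b ^ (j + 1) * x * (b ^ (j + 1))⁻¹ := by
          rw [h1, h2, pow_succ']; group

/-- Any homomorphism out of `Γ` can be twisted at `τ` by an element `z` commuting with the images
of the conjugates `τ ^ j * x k * τ ^ (-j)` for `j < N`. -/
def Twistable {Γ : Type*} [Group Γ] (τ : Γ) {n : ℕ} (x : Fin n → Γ) (N : ℕ) : Prop :=
  ∀ (E : Type) [Group E] (β : Γ →* E) (z : E),
    (∀ k, ∀ j < N, Commute z (β (τ ^ j * x k * (τ ^ j)⁻¹))) →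
    ∃ φ : Γ →* E, φ τ = β τ * z ∧ ∀ k, φ (x k) = β (x k)

/-- An element of the kernel is, after conjugation by a large power of `t`, a word in the conjugates
of the `x k` by powers of `t` with exponents in a bounded range of natural numbers. -/
theorem eventually_conj_mem {G ι : Type*} [Group G] (t : G) (x : ι → G) (r : G)
    (hr : r ∈ Subgroup.closure {g | ∃ (k : ι) (j : ℤ), g = t ^ j * x k * (t ^ j)⁻¹}) :
    ∀ᶠ N : ℕ in Filter.atTop, t ^ N * r * (t ^ N)⁻¹ ∈
      Subgroup.closure {g | ∃ (k : ι) (j : ℕ), j ≤ 2 * N ∧ g = t ^ j * x k * (t ^ j)⁻¹} := by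
  induction hr using Subgroup.closure_induction with
  | mem g hg =>
    obtain ⟨k, j, rfl⟩ := hg
    filter_upwards [Filter.eventually_ge_atTop j.natAbs] with N hN
    refine Subgroup.subset_closure ⟨k, ((N : ℤ) + j).toNat, by omega, ?_⟩
    rw [← zpow_natCast t (((N : ℤ) + j).toNat), Int.toNat_of_nonneg (by omega), zpow_add,
      zpow_natCast]
    group
  | one => simp
  | mul a b _ _ ha hb =>
    filter_upwards [ha, hb] with N h1 h2
    have := Subgroup.mul_mem _ h1 h2
    simpa [mul_assoc] using this
  | inv a _ ha =>
    filter_upwards [ha] with N h1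
    have := Subgroup.inv_mem _ h1
    simpa [mul_assoc] using this

/-- The relators of a finite presentation of `Γ` are, up to conjugation, words in finitely many
conjugates of the `x k`, on which a twist has no effect; hence it respects the relators. -/
theorem exists_twistable {Γ : Type*} [Group Γ] (hΓ : IsFinitelyPresented Γ)
    (ρ : Γ →* Multiplicative ℤ) (τ : Γ) (hτ : ρ τ = Multiplicative.ofAdd 1) :
    ∃ (n : ℕ) (x : Fin n → Γ) (N : ℕ), (∀ k, ρ (x k) = 1) ∧
      Subgroup.closure (Set.range x ∪ {τ}) = ⊤ ∧ Twistable τ x N := by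
  obtain ⟨n, rels, hfin, ⟨e⟩⟩ := hΓ
  let f : FreeGroup (Fin n) →* Γ := e.toMonoidHom.comp (PresentedGroup.mk rels)
  have hf : Function.Surjective f := e.surjective.comp (PresentedGroup.mk_surjective rels)
  let d : Fin n → ℤ := fun k => Multiplicative.toAdd (ρ (f (FreeGroup.of k)))
  let x : Fin n → Γ := fun k => f (FreeGroup.of k) * (τ ^ d k)⁻¹
  have hx : ∀ k, ρ (x k) = 1 := by
    intro k
    simp only [x, map_mul, map_inv, map_zpow, hτ, ← ofAdd_zsmul, d]
    simp
  -- `Γ` is a quotient of the free group on `none`, standing for `τ`, and `some k`, for `x k`.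
  let t : FreeGroup (Option (Fin n)) := FreeGroup.of none
  let X : Fin n → FreeGroup (Option (Fin n)) := fun k => FreeGroup.of (some k)
  let π : FreeGroup (Option (Fin n)) →* Γ := FreeGroup.lift fun o => o.elim τ x
  have hπt : π t = τ := by simp [π, t]
  have hπX : ∀ k, π (X k) = x k := by intro k; simp [π, X]
  let ι : FreeGroup (Fin n) →* FreeGroup (Option (Fin n)) :=
    FreeGroup.lift fun k => X k * t ^ d k
  have hπι : ∀ v, π (ι v) = f v := by
    intro v
    have : π.comp ι = f := by
      ext k
      simp [ι, hπt, hπX, x]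
    exact DFunLike.congr_fun this v
  have hXgen : Subgroup.closure (Set.range X ∪ {t}) = ⊤ := by
    rw [eq_top_iff, ← FreeGroup.closure_range_of, Subgroup.closure_le]
    rintro _ ⟨o, rfl⟩
    apply Subgroup.subset_closure
    cases o with
    | none => exact Or.inr rfl
    | some k => exact Or.inl ⟨k, rfl⟩
  have hπsurj : Function.Surjective π := fun g => by
    obtain ⟨v, rfl⟩ := hf g
    exact ⟨ι v, hπι v⟩
  have hxgen : Subgroup.closure (Set.range x ∪ {τ}) = ⊤ := by
    rw [← Subgroup.map_top_of_surjective π hπsurj, ← hXgen, MonoidHom.map_closure,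
      Set.image_union, Set.image_singleton, hπt, ← Set.range_comp]
    congr 3
    funext k
    exact (hπX k).symm
  obtain ⟨w, hw⟩ := hf τ
  -- Relators on the enlarged generating set: the old ones, and the definition of `t`.
  let R : Set (FreeGroup (Option (Fin n))) := ι '' rels ∪ {t⁻¹ * ι w}
  have hRfin : R.Finite := (hfin.image _).union (Set.finite_singleton _)
  have hRπ : ∀ r ∈ R, π r = 1 := by
    rintro r (⟨v, hv, rfl⟩ | hr)
    · rw [hπι]
      simp only [f, MonoidHom.comp_apply]
      rw [PresentedGroup.one_of_mem hv]
      simp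
    · rw [Set.mem_singleton_iff.1 hr, map_mul, map_inv, hπt, hπι, hw, inv_mul_cancel]
  have hev : ∀ᶠ N : ℕ in Filter.atTop, ∀ r ∈ R, t ^ N * r * (t ^ N)⁻¹ ∈
      Subgroup.closure {g | ∃ (k : Fin n) (j : ℕ), j ≤ 2 * N ∧ g = t ^ j * X k * (t ^ j)⁻¹} := by
    rw [Filter.eventually_all_finite hRfin]
    intro r hr
    refine eventually_conj_mem t X r (ker_le_closure_conj (ρ.comp π) t X ?_ ?_ hXgen ?_)
    · simp [hπt, hτ]
    · intro k; simp [hπX, hx]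
    · simp [MonoidHom.mem_ker, hRπ r hr]
  obtain ⟨N, hN⟩ := hev.exists
  refine ⟨n, x, 2 * N, hx, hxgen, ?_⟩
  intro E _ β z hz
  let φ' : FreeGroup (Option (Fin n)) →* E :=
    FreeGroup.lift fun o => o.elim (β τ * z) fun k => β (x k)
  have hφt : φ' t = β τ * z := by simp [φ', t]
  have hφX : ∀ k, φ' (X k) = β (x k) := by intro k; simp [φ', X]
  have hagree : Set.EqOn φ' (β.comp π) (Subgroup.closure
      {g | ∃ (k : Fin n) (j : ℕ), j ≤ 2 * N ∧ g = t ^ j * X k * (t ^ j)⁻¹}) := by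
    apply MonoidHom.eqOn_closure
    rintro _ ⟨k, j, hj, rfl⟩
    have := twist_conj_pow (β τ) z (β (x k)) (2 * N)
      (fun j hj => by simpa using hz k j hj) j hj
    simpa [hφt, hφX, hπt, hπX] using this
  have hφR : ∀ r ∈ R, φ' r = 1 := by
    intro r hr
    have h1 := hagree (hN r hr)
    simpa [hRπ r hr] using h1
  have hlift : ∀ v, FreeGroup.lift (fun k => φ' (ι (FreeGroup.of k))) v = φ' (ι v) := by
    intro v
    have : FreeGroup.lift (fun k => φ' (ι (FreeGroup.of k))) = φ'.comp ι := by
      ext k; simp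
    exact DFunLike.congr_fun this v
  have hrel : ∀ r ∈ rels, FreeGroup.lift (fun k => φ' (ι (FreeGroup.of k))) r = 1 := by
    intro r hr
    rw [hlift]
    exact hφR _ (Or.inl ⟨r, hr, rfl⟩)
  let φ : Γ →* E := (PresentedGroup.toGroup hrel).comp e.symm.toMonoidHom
  have hφ : ∀ v, φ (f v) = φ' (ι v) := by
    intro v
    have : φ.comp f = φ'.comp ι := by
      ext k
      have h2 : PresentedGroup.toGroup hrel (PresentedGroup.of k) = φ' (ι (FreeGroup.of k)) :=
        PresentedGroup.toGroup.of hrel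
      simp only [φ, f, MonoidHom.comp_apply, MulEquiv.toMonoidHom_eq_coe, MonoidHom.coe_coe,
        MulEquiv.symm_apply_apply]
      exact h2
    exact DFunLike.congr_fun this v
  have hφτ : φ τ = β τ * z := by
    have h1 := hφR _ (Or.inr rfl : t⁻¹ * ι w ∈ R)
    rw [map_mul, map_inv, inv_mul_eq_one] at h1
    rw [← hφt, h1, ← hφ, hw]
  refine ⟨φ, hφτ, fun k => ?_⟩
  have h1 : φ (x k) = φ' (ι (FreeGroup.of k)) * (φ τ ^ d k)⁻¹ := by
    simp only [x, map_mul, map_inv, map_zpow, hφ]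
  rw [h1, hφτ]
  simp [ι, hφt, hφX]

/-! ### Separability -/

/-- In a LERF group, a finitely generated subgroup that contains one of its conjugates equals that
conjugate: their images in a finite group have the same cardinality. -/
theorem IsLERF.conj_inv_mem {Γ : Type*} [Group Γ] (hL : IsLERF Γ) (A : Subgroup Γ) (hA : A.FG)
    (t : Γ) (h : ∀ a ∈ A, t * a * t⁻¹ ∈ A) : ∀ a ∈ A, t⁻¹ * a * t ∈ A := by
  intro a ha
  by_contra hna
  obtain ⟨Q, _, _, α, -, hα⟩ := hL A hA _ hna
  -- Conjugation by `α t` is an injective self-map of the finite set `α(A)`, hence surjective.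
  let c : A.map α → A.map α := fun b => ⟨α t * b * (α t)⁻¹, by
    obtain ⟨_, b, hb, rfl⟩ := b
    exact ⟨t * b * t⁻¹, h b hb, by simp⟩⟩
  have hc : Function.Injective c := by
    intro b b' hbb
    have := congrArg Subtype.val hbb
    simpa [c] using this
  obtain ⟨⟨_, b, hb, rfl⟩, hbc⟩ := Finite.surjective_of_injective hc ⟨α a, a, ha, rfl⟩
  have h1 : α t * α b * (α t)⁻¹ = α a := congrArg Subtype.val hbc
  refine hα ⟨b, hb, ?_⟩
  rw [map_mul, map_mul, map_inv, ← h1]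
  group

/-- Otherwise `A` would be normalised by `τ`, hence equal to `ker ρ`, which is not finitely
generated. -/
theorem exists_conj_notMem {Γ : Type*} [Group Γ] (hL : IsLERF Γ) (ρ : Γ →* Multiplicative ℤ)
    (hker : ¬ Group.FG ρ.ker) (τ : Γ) (hτ : ρ τ = Multiplicative.ofAdd 1) {n : ℕ} (x : Fin n → Γ)
    (hx : ∀ k, ρ (x k) = 1) (hgen : Subgroup.closure (Set.range x ∪ {τ}) = ⊤) (N : ℕ)
    (A : Subgroup Γ)
    (hA : A = Subgroup.closure (Set.range fun p : Fin n × Fin N =>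
      τ ^ (p.2 : ℕ) * x p.1 * (τ ^ (p.2 : ℕ))⁻¹)) :
    A.FG ∧ ∃ k, τ ^ N * x k * (τ ^ N)⁻¹ ∉ A := by
  have hFG : A.FG := (Subgroup.fg_iff A).2 ⟨_, hA.symm, Set.finite_range _⟩
  refine ⟨hFG, ?_⟩
  by_contra! hall
  have hlt : ∀ k, ∀ j ≤ N, τ ^ j * x k * (τ ^ j)⁻¹ ∈ A := by
    intro k j hj
    rcases hj.lt_or_eq with hj | rfl
    · rw [hA]
      exact Subgroup.subset_closure ⟨(k, ⟨j, hj⟩), rfl⟩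
    · exact hall k
  have hup : ∀ a ∈ A, τ * a * τ⁻¹ ∈ A := by
    have : A ≤ A.comap (MulAut.conj τ).toMonoidHom := by
      conv_lhs => rw [hA]
      rw [Subgroup.closure_le]
      rintro _ ⟨⟨k, j⟩, rfl⟩
      have h1 := hlt k (j + 1) j.2
      simpa [pow_succ', mul_assoc] using h1
    exact fun a ha => by simpa using this ha
  have hdown := hL.conj_inv_mem A hFG τ hup
  have hle : ρ.ker ≤ A := by
    refine (ker_le_closure_conj ρ τ x hτ hx hgen).trans ?_
    rw [Subgroup.closure_le]
    rintro _ ⟨k, j, rfl⟩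
    simp only [SetLike.mem_coe]
    induction j using Int.induction_on with
    | zero => simpa using hlt k 0 (Nat.zero_le _)
    | succ j ih =>
      have h1 := hup _ ih
      have h2 : τ * (τ ^ (j : ℤ) * x k * (τ ^ (j : ℤ))⁻¹) * τ⁻¹
          = τ ^ ((j : ℤ) + 1) * x k * (τ ^ ((j : ℤ) + 1))⁻¹ := by group
      rwa [h2] at h1
    | pred j ih =>
      have h1 := hdown _ ih
      have h2 : τ⁻¹ * (τ ^ (-(j : ℤ)) * x k * (τ ^ (-(j : ℤ)))⁻¹) * τ
          = τ ^ (-(j : ℤ) - 1) * x k * (τ ^ (-(j : ℤ) - 1))⁻¹ := by group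
      rwa [h2] at h1
  have hge : A ≤ ρ.ker := by
    rw [hA, Subgroup.closure_le]
    rintro _ ⟨⟨k, j⟩, rfl⟩
    simp [MonoidHom.mem_ker, hx]
  apply hker
  rw [Group.fg_iff_subgroup_fg, le_antisymm hle hge]
  exact hFG

/-! ### Counting twisted permutation actions -/

/-- The action of `Γ` on `ℤ/i × Q × ℤ/2` through `ρ` mod `i` on the first factor, `α` on the second,
and trivially on the third. -/
def baseAction {Γ Q : Type*} [Group Γ] [Group Q] (ρ : Γ →* Multiplicative ℤ) (α : Γ →* Q) (i : ℕ) :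
    Γ →* Equiv.Perm (ZMod i × Q × ZMod 2) where
  toFun g :=
    { toFun := fun p => (p.1 + (Multiplicative.toAdd (ρ g) : ℤ), α g * p.2.1, p.2.2)
      invFun := fun p => (p.1 - (Multiplicative.toAdd (ρ g) : ℤ), (α g)⁻¹ * p.2.1, p.2.2)
      left_inv := fun p => by simp
      right_inv := fun p => by simp }
  map_one' := by ext p <;> simp
  map_mul' g h := by
    ext p
    · simp; ring
    · simp [mul_assoc]
    · simp

/-- The permutation `(s, q, e) ↦ (s, q, e + c s * u q)`. -/
def fibreShift {Q : Type*} {i : ℕ} (c : ZMod i → ZMod 2) (u : Q → ZMod 2) :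
    Equiv.Perm (ZMod i × Q × ZMod 2) where
  toFun p := (p.1, p.2.1, p.2.2 + c p.1 * u p.2.1)
  invFun p := (p.1, p.2.1, p.2.2 - c p.1 * u p.2.1)
  left_inv p := by simp
  right_inv p := by simp

theorem fst_twisted {Γ Q : Type*} [Group Γ] [Group Q] (ρ : Γ →* Multiplicative ℤ) (α : Γ →* Q)
    {i : ℕ} {τ : Γ} {n : ℕ} {x : Fin n → Γ} (hgen : Subgroup.closure (Set.range x ∪ {τ}) = ⊤)
    {c : ZMod i → ZMod 2} {u : Q → ZMod 2} {φ : Γ →* Equiv.Perm (ZMod i × Q × ZMod 2)}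
    (hφτ : φ τ = baseAction ρ α i τ * fibreShift c u)
    (hφx : ∀ k, φ (x k) = baseAction ρ α i (x k)) (g : Γ) :
    ∀ p, (φ g p).1 = p.1 + ((Multiplicative.toAdd (ρ g) : ℤ) : ZMod i) := by
  have hg : g ∈ Subgroup.closure (Set.range x ∪ {τ}) := by rw [hgen]; trivial
  induction hg using Subgroup.closure_induction with
  | mem g hg =>
    rcases hg with ⟨k, rfl⟩ | hg
    · intro p; simp [hφx, baseAction]
    · intro p
      rw [Set.mem_singleton_iff.1 hg, hφτ]
      simp [baseAction, fibreShift]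
  | one => simp
  | mul a b _ _ ha hb =>
    intro p
    rw [map_mul, Equiv.Perm.mul_apply, ha, hb]
    simp
    ring
  | inv a _ ha =>
    intro p
    have := ha ((φ a)⁻¹ p)
    rw [← Equiv.Perm.mul_apply, mul_inv_cancel, Equiv.Perm.one_apply] at this
    rw [map_inv, this]
    simp

/-- Powers of `τ` accumulate the values of `c` along the orbit of the fibre over `0`. -/
theorem twisted_pow {Γ Q : Type*} [Group Γ] [Group Q] (ρ : Γ →* Multiplicative ℤ) (α : Γ →* Q)
    {i : ℕ} {τ : Γ} (hτ : ρ τ = Multiplicative.ofAdd 1)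
    {c : ZMod i → ZMod 2} {u : Q → ZMod 2} {φ : Γ →* Equiv.Perm (ZMod i × Q × ZMod 2)}
    (hφτ : φ τ = baseAction ρ α i τ * fibreShift c u) (j : ℕ) (q : Q) (e : ZMod 2) :
    φ (τ ^ j) (0, q, e) = ((j : ZMod i), α τ ^ j * q,
      e + ∑ l ∈ Finset.range j, c (l : ZMod i) * u (α τ ^ l * q)) := by
  induction j with
  | zero => simp
  | succ j ih =>
    rw [pow_succ', map_mul, Equiv.Perm.mul_apply, ih, hφτ, Finset.sum_range_succ]
    simp [baseAction, fibreShift, hτ, pow_succ', mul_assoc, add_assoc]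

theorem mem_modKer_iff {Γ : Type*} [Group Γ] (ρ : Γ →* Multiplicative ℤ) (i : ℕ) (g : Γ) :
    g ∈ modKer ρ i ↔ ((Multiplicative.toAdd (ρ g) : ℤ) : ZMod i) = 0 := by
  rw [modKer, MonoidHom.mem_ker]
  rfl

/-- A function on `ℤ/i` supported on multiples of `m`, with the value `C k` at `m * k`. -/
def spread (m i : ℕ) (C : ℕ → ZMod 2) : ZMod i → ZMod 2 :=
  fun s => if m ∣ s.val then C (s.val / m) else 0

theorem sum_spread {m i : ℕ} (hm : 0 < m) (C : ℕ → ZMod 2) {Q : Type*} [Group Q] (θ : Q)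
    (hθ : θ ^ m = 1) (u : Q → ZMod 2) (q : Q) (k : ℕ) (hk : m * k ≤ i) :
    ∑ l ∈ Finset.range (m * k), spread m i C (l : ZMod i) * u (θ ^ l * q)
      = (∑ r ∈ Finset.range k, C r) * u q := by
  induction k with
  | zero => simp
  | succ k ih =>
    have hmk : m * (k + 1) = m * k + m := by ring
    rw [hmk] at hk ⊢
    rw [Finset.sum_range_add, ih (by omega), Finset.sum_range_succ, add_mul]
    congr 1
    have hval : ∀ l < m, ((m * k + l : ℕ) : ZMod i).val = m * k + l := fun l hl =>
      ZMod.val_cast_of_lt (by omega)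
    rw [Finset.sum_eq_single 0]
    · have h0 := hval 0 hm
      rw [spread, h0, pow_add, pow_mul, hθ]
      simp [hm]
    · intro l hl hl0
      have hl' := Finset.mem_range.1 hl
      rw [spread, hval l hl', if_neg, zero_mul]
      rw [Nat.dvd_add_right (dvd_mul_right m k)]
      exact Nat.not_dvd_of_pos_of_lt (Nat.pos_of_ne_zero hl0) hl'
    · intro h
      exact absurd (Finset.mem_range.2 hm) h

/-- If `G_i` is generated by `S`, comparing the number of twisted actions of `G_i` on `Q × ℤ/2` with
the number of possible images of `S` bounds `S.card` from below. -/
theorem two_pow_le {Γ : Type*} [Group Γ] (ρ : Γ →* Multiplicative ℤ) {τ : Γ}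
    (hτ : ρ τ = Multiplicative.ofAdd 1) {n : ℕ} {x : Fin n → Γ} (hx : ∀ k, ρ (x k) = 1)
    (hgen : Subgroup.closure (Set.range x ∪ {τ}) = ⊤) {N : ℕ} (hT : Twistable τ x N)
    {Q : Type} [Group Q] [Finite Q] (α : Γ →* Q) (A : Subgroup Γ)
    (hA : ∀ k, ∀ j < N, τ ^ j * x k * (τ ^ j)⁻¹ ∈ A) (k₀ : Fin n)
    (hk₀ : α (τ ^ N * x k₀ * (τ ^ N)⁻¹) ∉ A.map α)
    {m i b : ℕ} (hm : 0 < m) (hαm : α τ ^ m = 1) (hb : m * b ≤ i)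
    (S : Finset (modKer ρ i)) (hS : Subgroup.closure (S : Set (modKer ρ i)) = ⊤) :
    2 ^ b ≤ (Nat.card (Q × ZMod 2) ^ Nat.card (Q × ZMod 2)) ^ S.card := by
  classical
  let u : Q → ZMod 2 := fun q => if q ∈ A.map α then 1 else 0
  have hu1 : u 1 = 1 := if_pos (one_mem _)
  set a : Γ := τ ^ N * x k₀ * (τ ^ N)⁻¹ with ha
  have hua : u (α a) = 0 := if_neg hk₀
  have hρa : ρ a = 1 := by simp [ha, hx]
  have hcomm : ∀ c : ZMod i → ZMod 2, ∀ k, ∀ j < N,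
      Commute (fibreShift c u) (baseAction ρ α i (τ ^ j * x k * (τ ^ j)⁻¹)) := by
    intro c k j hj
    have h1 : ρ (τ ^ j * x k * (τ ^ j)⁻¹) = 1 := by simp [hx]
    have h2 : ∀ q, u (α (τ ^ j * x k * (τ ^ j)⁻¹) * q) = u q := by
      intro q
      have : α (τ ^ j * x k * (τ ^ j)⁻¹) ∈ A.map α := ⟨_, hA k j hj, rfl⟩
      simp only [u, Subgroup.mul_mem_cancel_left _ this]
    generalize τ ^ j * x k * (τ ^ j)⁻¹ = y at h1 h2
    refine Equiv.ext fun p => ?_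
    simp [baseAction, fibreShift, h1, h2]
  choose φ hφτ hφx using fun c => hT _ (baseAction ρ α i) (fibreShift c u) (hcomm c)
  have hφa : ∀ c, φ c a = baseAction ρ α i a := by
    intro c
    have := twist_conj_pow (baseAction ρ α i τ) (fibreShift c u) (baseAction ρ α i (x k₀)) N
      (fun j hj => by simpa using hcomm c k₀ j hj) N le_rfl
    simpa [ha, hφτ, hφx] using this
  -- The effect of the twist on the conjugates `τ ^ (-m * k) * a * τ ^ (m * k)`.
  have hval : ∀ (C : ℕ → ZMod 2) (k : ℕ), k ≤ b →
      φ (spread m i C) ((τ ^ (m * k))⁻¹ * a * τ ^ (m * k)) (0, 1, 0) =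
        (0, α a, ∑ r ∈ Finset.range k, C r) := by
    intro C k hk
    have hmk : m * k ≤ i := (Nat.mul_le_mul_left m hk).trans hb
    rw [map_mul, map_mul, map_inv, Equiv.Perm.mul_apply, Equiv.Perm.mul_apply,
      Equiv.Perm.inv_eq_iff_eq, twisted_pow ρ α hτ (hφτ _), twisted_pow ρ α hτ (hφτ _), hφa,
      sum_spread hm C _ hαm u _ k hmk, sum_spread hm C _ hαm u _ k hmk, pow_mul, hαm]
    simp [hua, hu1, baseAction, hρa]
  -- Extension by zero of a choice of `b` values.
  let ex0 : (Fin b → ZMod 2) → ℕ → ZMod 2 := fun C r => if h : r < b then C ⟨r, h⟩ else 0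
  let F : (Fin b → ZMod 2) → (S → Q × ZMod 2 → Q × ZMod 2) :=
    fun C s y => (φ (spread m i (ex0 C)) (s : modKer ρ i) (0, y)).2
  have hF : Function.Injective F := by
    intro C C' hCC
    have hfst : ∀ (D : Fin b → ZMod 2) (g : modKer ρ i) (y : Q × ZMod 2),
        (φ (spread m i (ex0 D)) g (0, y)).1 = 0 := by
      intro D g y
      rw [fst_twisted ρ α hgen (hφτ _) (hφx _), (mem_modKer_iff ρ i g).1 g.2, add_zero]
    have hall : ∀ (g : modKer ρ i) (y : Q × ZMod 2),
        φ (spread m i (ex0 C)) g (0, y) = φ (spread m i (ex0 C')) g (0, y) := by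
      intro g
      have hg : g ∈ Subgroup.closure (S : Set (modKer ρ i)) := by rw [hS]; trivial
      induction hg using Subgroup.closure_induction with
      | mem g hg =>
        intro y
        refine Prod.ext ?_ ?_
        · rw [hfst, hfst]
        · exact congrFun (congrFun hCC ⟨g, hg⟩) y
      | one => simp
      | mul g h _ _ ihg ihh =>
        intro y
        have h1 := hfst C' h y
        rw [Subgroup.coe_mul, map_mul, map_mul, Equiv.Perm.mul_apply, Equiv.Perm.mul_apply, ihh]
        generalize φ (spread m i (ex0 C')) h (0, y) = p at h1
        obtain ⟨p, y'⟩ := p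
        obtain rfl : p = 0 := h1
        exact ihg y'
      | inv g _ ihg =>
        intro y
        have h1 := hfst C' g⁻¹ y
        have h2 : φ (spread m i (ex0 C')) (g⁻¹ : modKer ρ i) (0, y) =
          (φ (spread m i (ex0 C')) g)⁻¹ (0, y) := by simp
        have h3 : φ (spread m i (ex0 C')) g (φ (spread m i (ex0 C')) (g⁻¹ : modKer ρ i) (0, y)) =
          (0, y) := by rw [h2, ← Equiv.Perm.mul_apply, mul_inv_cancel, Equiv.Perm.one_apply]
        have h4 : φ (spread m i (ex0 C)) (g⁻¹ : modKer ρ i) =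
          (φ (spread m i (ex0 C)) g)⁻¹ := by simp
        rw [h4, Equiv.Perm.inv_eq_iff_eq]
        refine h3.symm.trans ?_
        generalize φ (spread m i (ex0 C')) (g⁻¹ : modKer ρ i) (0, y) = p at h1
        obtain ⟨p, y'⟩ := p
        obtain rfl : p = 0 := h1
        rw [ihg]
    have hsum : ∀ k ≤ b, ∑ r ∈ Finset.range k, ex0 C r = ∑ r ∈ Finset.range k, ex0 C' r := by
      intro k hk
      have hmem : (τ ^ (m * k))⁻¹ * a * τ ^ (m * k) ∈ modKer ρ i := by
        rw [mem_modKer_iff]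
        simp [hρa]
      have h1 := hall ⟨_, hmem⟩ (1, 0)
      rw [hval _ k hk, hval _ k hk] at h1
      simpa using h1
    funext r
    have h1 := hsum (r + 1) r.2
    rw [Finset.sum_range_succ, Finset.sum_range_succ, hsum r r.2.le] at h1
    have h2 := add_left_cancel h1
    simpa [ex0] using h2
  have := Nat.card_le_card_of_injective F hF
  simpa [Nat.card_fun, Nat.card_zmod] using this

/-! ### The rank gradient -/

theorem index_modKer {Γ : Type*} [Group Γ] (ρ : Γ →* Multiplicative ℤ)
    (hρ : Function.Surjective ρ) (i : ℕ) : (modKer ρ i).index = i := by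
  rw [modKer, Subgroup.index_ker, MonoidHom.range_eq_top.2]
  · simp [Nat.card_congr Multiplicative.toAdd]
  · exact Function.Surjective.comp (g := AddMonoidHom.toMultiplicative (Int.castAddHom (ZMod i)))
      (fun s => ZMod.intCast_surjective (n := i) s) hρ

/-- If `Γ` is a finitely presented LERF group and `ρ : Γ → ℤ` is a
surjective homomorphism whose kernel is not finitely generated, then `rg(Γ, ρ) > 0`. -/
theorem rg_pos_of_lerf_of_ker_not_fg
    {Γ : Type*} [Group Γ] (hΓ : IsFinitelyPresented Γ) (hL : IsLERF Γ)
    (ρ : Γ →* Multiplicative ℤ) (hρ : Function.Surjective ρ)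
    (hker : ¬ Group.FG ρ.ker) :
    0 < rg ρ := by
  obtain ⟨τ, hτ⟩ := hρ (Multiplicative.ofAdd 1)
  obtain ⟨n, x, N, hx, hgen, hT⟩ := exists_twistable hΓ ρ τ hτ
  obtain ⟨A, hA⟩ : ∃ A : Subgroup Γ, A = Subgroup.closure (Set.range fun p : Fin n × Fin N =>
      τ ^ (p.2 : ℕ) * x p.1 * (τ ^ (p.2 : ℕ))⁻¹) := ⟨_, rfl⟩
  obtain ⟨hAfg, k₀, hk₀⟩ := exists_conj_notMem hL ρ hker τ hτ x hx hgen N A hA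
  obtain ⟨Q, _, _, α, -, hα⟩ := hL A hAfg _ hk₀
  have hAmem : ∀ k, ∀ j < N, τ ^ j * x k * (τ ^ j)⁻¹ ∈ A := by
    intro k j hj
    rw [hA]
    exact Subgroup.subset_closure ⟨(k, ⟨j, hj⟩), rfl⟩
  obtain ⟨m, hm, hαm⟩ : ∃ m, 0 < m ∧ α τ ^ m = 1 :=
    ⟨orderOf (α τ), orderOf_pos _, pow_orderOf_eq_one _⟩
  obtain ⟨K, hK⟩ : ∃ K, K = Nat.card (Q × ZMod 2) ^ Nat.card (Q × ZMod 2) := ⟨_, rfl⟩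
  have hK0 : 0 < K := by rw [hK]; exact pow_pos Nat.card_pos _
  have : Group.FG Γ := by
    rw [Group.fg_iff]
    exact ⟨_, hgen, (Set.finite_range x).union (Set.finite_singleton τ)⟩
  have hidx := index_modKer ρ hρ
  have hlow : ∀ i, m ≤ i → 1 / (2 * m * K : ℝ) ≤
      (grank (modKer ρ i) : ℝ) / ((modKer ρ i).index : ℝ) := by
    intro i hi
    have : (modKer ρ i).FiniteIndex := ⟨by rw [hidx]; omega⟩
    -- The infimum defining `grank` is attained because `G_i` is finitely generated.
    obtain ⟨S, hcard, hS⟩ : grank (modKer ρ i) ∈ {n : ℕ | ∃ S : Finset (modKer ρ i),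
        S.card = n ∧ Subgroup.closure (S : Set (modKer ρ i)) = ⊤} := by
      apply Nat.sInf_mem
      obtain ⟨S, hS⟩ := (Group.fg_def (G := modKer ρ i)).1 inferInstance
      exact ⟨S.card, S, rfl, hS⟩
    have h1 := two_pow_le ρ hτ hx hgen hT α A hAmem k₀ hα hm hαm (Nat.mul_div_le i m) S hS
    rw [← hK, hcard] at h1
    have h2 : i / m ≤ K * grank (modKer ρ i) := by
      have h3 : (2 : ℕ) ^ (i / m) ≤ 2 ^ (K * grank (modKer ρ i)) := by
        rw [pow_mul]
        exact h1.trans (Nat.pow_le_pow_left Nat.lt_two_pow_self.le _)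
      exact (Nat.pow_le_pow_iff_right (by norm_num)).1 h3
    have h4 : 1 ≤ i / m := (Nat.one_le_div_iff hm).2 hi
    have h5 : i < m * (i / m + 1) := Nat.lt_mul_div_succ i hm
    have h6 : i ≤ 2 * m * K * grank (modKer ρ i) := by nlinarith
    have h7 : (i : ℝ) ≤ 2 * m * K * grank (modKer ρ i) := by exact_mod_cast h6
    have hi0 : (0 : ℝ) < i := by exact_mod_cast (by omega : 0 < i)
    have hm' : (0 : ℝ) < m := by exact_mod_cast hm
    have hK' : (0 : ℝ) < K := by exact_mod_cast hK0
    rw [hidx, div_le_div_iff₀ (by positivity) hi0]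
    linarith
  obtain ⟨T, hTgen⟩ := (Group.fg_def (G := Γ)).1 inferInstance
  -- Schreier's bound keeps the sequence bounded above, so that its real `liminf` is not junk.
  have hup : ∀ i, m ≤ i →
      (grank (modKer ρ i) : ℝ) / ((modKer ρ i).index : ℝ) ≤ T.card := by
    intro i hi
    have : (modKer ρ i).FiniteIndex := ⟨by rw [hidx]; omega⟩
    obtain ⟨S, hcard, hS⟩ := Subgroup.exists_finset_card_le_mul (modKer ρ i) hTgen
    have h1 : grank (modKer ρ i) ≤ S.card := Nat.sInf_le ⟨S, rfl, hS⟩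
    rw [hidx] at hcard ⊢
    have hi0 : (0 : ℝ) < i := by exact_mod_cast (by omega : 0 < i)
    rw [div_le_iff₀ hi0]
    have h2 : grank (modKer ρ i) ≤ T.card * i := by linarith
    exact_mod_cast h2
  have hm' : (0 : ℝ) < m := by exact_mod_cast hm
  have hK' : (0 : ℝ) < K := by exact_mod_cast hK0
  refine lt_of_lt_of_le (by positivity : (0 : ℝ) < 1 / (2 * m * K)) ?_
  refine Filter.le_liminf_of_le ?_ ?_
  · refine Filter.IsBoundedUnder.isCoboundedUnder_ge ⟨(T.card : ℝ), ?_⟩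
    rw [Filter.eventually_map]
    filter_upwards [Filter.eventually_ge_atTop m] with i hi using hup i hi
  · filter_upwards [Filter.eventually_ge_atTop m] with i hi using hlow i hi
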